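/- Let k > d ≥ 0 be integers and let G be a finite simple graph on n vertices that is k-degenerate. Then α_d(G) ≥ (d+1)·n/(k+d+1). -/

import Mathlib

/-- The subgraph of `G` induced on `A` is `d`-degenerate: every nonempty (finite)
subset of `A` contains a vertex with at most `d` neighbours inside that subset. -/
def DegenOn {V : Type*} (G : SimpleGraph V) (d : ℕ) (A : Set V) : Prop :=
  ∀ S : Set V, S ⊆ A → S.Finite → S.Nonempty → ∃ v ∈ S, (S ∩ G.neighborSet v).ncard ≤ d

/-- `G` is `d`-degenerate. -/
def Degen {V : Type*} (G : SimpleGraph V) (d : ℕ) : Prop :=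
  DegenOn G d Set.univ

/-- `α_d(G)`: the maximum number of vertices of an induced `d`-degenerate subgraph of `G`. -/
noncomputable def alphaDeg {V : Type*} [Fintype V] (G : SimpleGraph V) (d : ℕ) : ℕ :=
  sSup {m : ℕ | ∃ A : Set V, DegenOn G d A ∧ A.ncard = m}

/-!
Build `G` up by repeatedly inserting a vertex with at most `k` earlier neighbours, and colour
greedily with `t = ⌈(k + 1) / (d + 1)⌉` colours: since `k < t (d + 1)`, some colour occurs on at
most `d` of the earlier neighbours of the new vertex, and giving it that colour keeps every colour
class `d`-degenerate. The largest class has at least `n / t` vertices, and `(d + 1) t ≤ k + d + 1`.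
-/

theorem ncard_eq_sum_ncard_fiber {α ι : Type*} [Fintype ι] {s : Set α} (hs : s.Finite)
    (f : α → ι) : s.ncard = ∑ i, (s ∩ f ⁻¹' {i}).ncard := by
  classical
  lift s to Finset α using hs
  have fiber_eq (i : ι) : (s : Set α) ∩ f ⁻¹' {i} = ↑{x ∈ s | f x = i} := by ext; simp
  simp only [fiber_eq, Set.ncard_coe_finset]
  exact Finset.card_eq_sum_card_fiberwise fun _ _ ↦ Finset.mem_coe.2 (Finset.mem_univ _)

theorem exists_ncard_fiber_le_of_ncard_lt_mul {α ι : Type*} [Fintype ι] {s : Set α}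
    (hs : s.Finite) (f : α → ι) {d : ℕ} (h : s.ncard < Fintype.card ι * (d + 1)) :
    ∃ i, (s ∩ f ⁻¹' {i}).ncard ≤ d := by
  have sum_lt : ∑ i, (s ∩ f ⁻¹' {i}).ncard < ∑ _i : ι, (d + 1) := by
    simpa [← ncard_eq_sum_ncard_fiber hs f] using h
  obtain ⟨i, -, hi⟩ := Finset.exists_lt_of_sum_lt sum_lt
  exact ⟨i, Nat.le_of_lt_succ hi⟩

namespace DegenOn

variable {V : Type*} {G : SimpleGraph V} {d k : ℕ} {A B : Set V} {v : V}

protected theorem mono (hA : DegenOn G d A) (hBA : B ⊆ A) : DegenOn G d B :=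
  fun S hS ↦ hA S (hS.trans hBA)

protected theorem empty : DegenOn G d ∅ :=
  fun _ hS _ hne ↦ absurd (Set.subset_empty_iff.1 hS) hne.ne_empty

protected theorem insert (hA : DegenOn G d A) (hfin : (A ∩ G.neighborSet v).Finite)
    (hv : (A ∩ G.neighborSet v).ncard ≤ d) : DegenOn G d (insert v A) := by
  intro S hS hSfin hSne
  by_cases hvS : v ∈ S
  · have inter_subset : S ∩ G.neighborSet v ⊆ A ∩ G.neighborSet v := fun w ⟨hwS, hvw⟩ ↦
      ⟨(hS hwS).resolve_left (G.ne_of_adj hvw).symm, hvw⟩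
    exact ⟨v, hvS, (Set.ncard_le_ncard inter_subset hfin).trans hv⟩
  · exact hA S ((Set.subset_insert_iff_of_notMem hvS).1 hS) hSfin hSne

@[elab_as_elim]
theorem induction_on {motive : Set V → Prop} (hA : DegenOn G k A) (hfin : A.Finite)
    (empty : motive ∅)
    (insert : ∀ v B, v ∉ B → B.Finite → (B ∩ G.neighborSet v).ncard ≤ k → motive B →
      motive (insert v B)) :
    motive A := by
  induction hn : A.ncard generalizing A with
  | zero => rwa [(Set.ncard_eq_zero hfin).1 hn]
  | succ n ih =>
    obtain ⟨v, hvA, hv⟩ := hA A subset_rfl hfin (Set.nonempty_of_ncard_ne_zero (by omega))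
    have hdiff : A \ {v} ⊆ A := Set.sdiff_subset
    have motive_diff : motive (A \ {v}) := by
      refine ih (hA.mono hdiff) (hfin.subset hdiff) ?_
      rw [Set.ncard_sdiff_singleton_of_mem hvA, hn, Nat.add_sub_cancel]
    have hv_diff : (A \ {v} ∩ G.neighborSet v).ncard ≤ k :=
      (Set.ncard_le_ncard (Set.inter_subset_inter_left _ hdiff)
        (hfin.inter_of_left _)).trans hv
    rw [← Set.insert_sdiff_self_of_mem hvA]
    exact insert v _ (by simp) (hfin.subset hdiff) hv_diff motive_diff

theorem exists_coloring_insert {ι : Type*} [Fintype ι] (hk : k < Fintype.card ι * (d + 1))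
    (hvB : v ∉ B) (hfin : B.Finite) (hv : (B ∩ G.neighborSet v).ncard ≤ k) {f : V → ι}
    (hf : ∀ i, DegenOn G d (B ∩ f ⁻¹' {i})) :
    ∃ g : V → ι, ∀ i, DegenOn G d (insert v B ∩ g ⁻¹' {i}) := by
  classical
  obtain ⟨i, hi⟩ :=
    exists_ncard_fiber_le_of_ncard_lt_mul (hfin.inter_of_left _) f (hv.trans_lt hk)
  rw [Set.inter_right_comm] at hi
  have class_insert : DegenOn G d (insert v (B ∩ f ⁻¹' {i})) :=
    (hf i).insert ((hfin.inter_of_left _).inter_of_left _) hi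
  have update_eq {w : V} (hw : w ∈ B) : Function.update f v i w = f w :=
    Function.update_of_ne (ne_of_mem_of_not_mem hw hvB) i f
  refine ⟨Function.update f v i, fun j ↦ ?_⟩
  rcases eq_or_ne i j with rfl | hij
  · refine class_insert.mono ?_
    rintro w ⟨rfl | hwB, hw⟩
    · exact Set.mem_insert w _
    · exact Set.mem_insert_of_mem v ⟨hwB, (update_eq hwB).symm.trans hw⟩
  · refine (hf j).mono ?_
    rintro w ⟨rfl | hwB, hw⟩
    · exact absurd (by simpa using hw) hij
    · exact ⟨hwB, (update_eq hwB).symm.trans hw⟩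

theorem exists_coloring {ι : Type*} [Fintype ι] (hA : DegenOn G k A) (hfin : A.Finite)
    (hk : k < Fintype.card ι * (d + 1)) : ∃ f : V → ι, ∀ i, DegenOn G d (A ∩ f ⁻¹' {i}) := by
  refine hA.induction_on hfin ?_ ?_
  · have : Nonempty ι := Fintype.card_pos_iff.1 (Nat.pos_of_mul_pos_right (k.zero_le.trans_lt hk))
    exact ⟨fun _ ↦ Classical.arbitrary ι, fun _ ↦ DegenOn.empty.mono Set.inter_subset_left⟩
  · rintro v B hvB hBfin hv ⟨f, hf⟩
    exact exists_coloring_insert hk hvB hBfin hv hf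

theorem ncard_le_alphaDeg [Fintype V] (hA : DegenOn G d A) : A.ncard ≤ alphaDeg G d := by
  refine le_csSup ⟨Nat.card V, ?_⟩ ⟨A, hA, rfl⟩
  rintro _ ⟨B, -, rfl⟩
  exact Set.ncard_le_card B

end DegenOn

theorem Degen.card_le_mul_alphaDeg {V : Type*} [Fintype V] {G : SimpleGraph V} {k d t : ℕ}
    (hG : Degen G k) (ht : k < t * (d + 1)) : Fintype.card V ≤ t * alphaDeg G d := by
  obtain ⟨f, hf⟩ := DegenOn.exists_coloring (ι := Fin t) hG Set.finite_univ (by simpa using ht)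
  calc
    Fintype.card V = (Set.univ : Set V).ncard := by
      rw [Set.ncard_univ, Nat.card_eq_fintype_card]
    _ = ∑ i, (Set.univ ∩ f ⁻¹' {i}).ncard := ncard_eq_sum_ncard_fiber Set.finite_univ f
    _ ≤ ∑ _i : Fin t, alphaDeg G d := Finset.sum_le_sum fun i _ ↦ (hf i).ncard_le_alphaDeg
    _ = t * alphaDeg G d := by simp

theorem ceilDiv_pos {a b : ℕ} (ha : 0 < a) (hb : 0 < b) : 0 < a ⌈/⌉ b := by
  have : 0 < b * (a ⌈/⌉ b) := ha.trans_le (le_smul_ceilDiv hb)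
  exact Nat.pos_of_mul_pos_left this

theorem mul_ceilDiv_le (a b : ℕ) : b * (a ⌈/⌉ b) ≤ a + b - 1 :=
  Nat.mul_div_le _ _

theorem succ_mul_div_le_div_ceilDiv (n k d : ℕ) :
    ((d : ℚ) + 1) * n / (k + d + 1) ≤ n / ((k + 1) ⌈/⌉ (d + 1) : ℕ) := by
  rw [div_le_div_iff₀ (by positivity) (by exact_mod_cast ceilDiv_pos k.succ_pos d.succ_pos)]
  calc
    ((d : ℚ) + 1) * n * ((k + 1) ⌈/⌉ (d + 1) : ℕ) = n * ((d + 1) * ((k + 1) ⌈/⌉ (d + 1) : ℕ)) := by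
      ring
    _ ≤ n * (k + d + 1) := by
      gcongr
      have : (d + 1) * ((k + 1) ⌈/⌉ (d + 1)) ≤ k + d + 1 :=
        (mul_ceilDiv_le (k + 1) (d + 1)).trans (by omega)
      exact_mod_cast this

theorem stmt_1_general {V : Type*} [Fintype V] (G : SimpleGraph V) (k d : ℕ) (hG : Degen G k) :
    (Fintype.card V : ℚ) / ((k + 1) ⌈/⌉ (d + 1) : ℕ) ≤ alphaDeg G d := by
  rw [div_le_iff₀' (by exact_mod_cast ceilDiv_pos k.succ_pos d.succ_pos)]
  have lt_ceilDiv_mul : k < ((k + 1) ⌈/⌉ (d + 1)) * (d + 1) := by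
    rw [mul_comm]
    exact le_smul_ceilDiv (b := k + 1) d.succ_pos
  exact_mod_cast hG.card_le_mul_alphaDeg lt_ceilDiv_mul

theorem stmt_1 {V : Type*} [Fintype V] (G : SimpleGraph V) (k d : ℕ) (hdk : d < k)
    (hG : Degen G k) :
    ((d : ℚ) + 1) * (Fintype.card V : ℚ) / ((k : ℚ) + (d : ℚ) + 1) ≤ (alphaDeg G d : ℚ) :=
  (succ_mul_div_le_div_ceilDiv _ k d).trans (stmt_1_general G k d hG)
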